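/- arXiv:1212.3529 — 2 statements merged into one kernel-verified Lean document; each statement's English description precedes it below -/
import Mathlib

section
/- Let R be a ring with a left Artinian left quotient ring Q = C⁻¹R, and let I be a C-closed ideal of R such that I ⊆ n. Then the factor ring R/I has a left Artinian left quotient ring Q(R/I), the set C⁻¹I is a (two-sided) ideal of Q, and the map Q/C⁻¹I → Q(R/I), c⁻¹r + C⁻¹I ↦ (c+I)⁻¹(r+I), is a ring isomorphism with inverse (c+I)⁻¹(r+I) ↦ c⁻¹r + C⁻¹I. -/
open Function

universe u v

/-- A regular element of a ring: a two-sided non-zero-divisor. -/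
def IsRegElem {R : Type*} [Ring R] (c : R) : Prop :=
  (∀ x : R, c * x = 0 → x = 0) ∧ (∀ x : R, x * c = 0 → x = 0)

/-- The set `C` of regular elements of a ring. -/
def regSet (R : Type*) [Ring R] : Set R := {c : R | IsRegElem c}

/-- A (left) ideal is two-sided. -/
def Ideal.IsTwoSidedNC {R : Type*} [Ring R] (I : Ideal R) : Prop :=
  ∀ a ∈ I, ∀ r : R, a * r ∈ I

/-- A prime (two-sided) ideal of a possibly noncommutative ring. -/
def Ideal.IsPrimeNC {R : Type*} [Ring R] (P : Ideal R) : Prop :=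
  P ≠ ⊤ ∧ P.IsTwoSidedNC ∧ ∀ a b : R, (∀ r : R, a * r * b ∈ P) → a ∈ P ∨ b ∈ P

/-- The prime radical `n` of a ring: the intersection of all prime ideals. -/
def primeRadical (R : Type*) [Ring R] : Ideal R := sInf {P : Ideal R | P.IsPrimeNC}

/-- `n` is a nilpotent ideal. -/
def IsNilpotentIdeal {R : Type*} [Ring R] (I : Ideal R) : Prop := ∃ k : ℕ, I ^ (k + 1) = ⊥

/-- `φ : R →+* Q` realizes `Q` as a left quotient ring `C⁻¹R` of `R`:  `R` embeds in `Q`,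
every regular element of `R` becomes invertible in `Q`, and every element of `Q` has the
form `(φ c)⁻¹ * (φ r)` with `c` regular. -/
structure IsLeftQuotRing {R : Type u} {Q : Type v} [Ring R] [Ring Q] (φ : R →+* Q) : Prop where
  inj : Function.Injective φ
  isUnit : ∀ c : R, IsRegElem c → IsUnit (φ c)
  denom : ∀ q : Q, ∃ c r : R, IsRegElem c ∧ φ c * q = φ r

/-- Data of a left quotient ring of `R`. -/
structure LeftQuotData (R : Type u) [Ring R] : Type (u + 1) where
  Q : Type u
  [instQ : Ring Q]
  φ : R →+* Q
  quot : IsLeftQuotRing φ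

attribute [instance] LeftQuotData.instQ

/-- `R` has a left Artinian left quotient ring `Q = C⁻¹R`. -/
def HasArtinianLeftQuot (R : Type u) [Ring R] : Prop :=
  ∃ d : LeftQuotData R, IsArtinianRing d.Q

/-- A subset of a ring is a left annihilator. -/
def IsLeftAnnihilatorSet {R : Type*} [Ring R] (A : Set R) : Prop :=
  ∃ S : Set R, A = {r : R | ∀ s ∈ S, r * s = 0}

/-- The ascending chain condition on left annihilators. -/
def ACCLeftAnnihilators (R : Type*) [Ring R] : Prop :=
  ∀ f : ℕ → Set R, (∀ i, IsLeftAnnihilatorSet (f i)) → (∀ i j, i ≤ j → f i ⊆ f j) →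
    ∃ N, ∀ k, N ≤ k → f k = f N

/-- The module `M` contains no infinite direct sum of nonzero submodules. -/
def NoInfiniteIndepFamily (R : Type*) (M : Type*) [Ring R] [AddCommGroup M] [Module R M] : Prop :=
  ¬ ∃ f : ℕ → Submodule R M, (∀ i, f i ≠ ⊥) ∧ iSupIndep f

/-- A left Goldie ring: ACC on left annihilators and no infinite direct sums of nonzero
left ideals. -/
def IsLeftGoldie (R : Type*) [Ring R] : Prop :=
  ACCLeftAnnihilators R ∧ NoInfiniteIndepFamily R R

/-- The subquotient `n^i/n^{i+1}` of `R` determined by the prime radical `n`. -/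
abbrev grPiece (R : Type*) [Ring R] (i : ℕ) :=
  ↥(primeRadical R ^ i) ⧸
    (Submodule.comap (primeRadical R ^ i : Ideal R).subtype (primeRadical R ^ (i + 1)))

/-- The class of `x ∈ n^i` in `n^i/n^{i+1}`. -/
def grMk {R : Type*} [Ring R] (i : ℕ) (x : R) (hx : x ∈ primeRadical R ^ i) : grPiece R i :=
  Submodule.Quotient.mk ⟨x, hx⟩

/-- The `C̄`-torsion submodule `τ_i` of `n^i/n^{i+1}` (take the span, which coincides with the
set of torsion elements whenever the latter is a submodule, e.g. when `C̄` is a left Ore set);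
here `C̄` is represented through `π : R → R̄` as `{c : R | IsRegElem (π c)}`. -/
def tauSub {R : Type u} {Rbar : Type v} [Ring R] [Ring Rbar] (π : R →+* Rbar) (i : ℕ) :
    Submodule R (grPiece R i) :=
  Submodule.span R {u : grPiece R i | ∃ c : R, IsRegElem (π c) ∧ c • u = 0}

/-- The `C̄`-torsionfree module `f_i = (n^i/n^{i+1})/τ_i`. -/
abbrev fMod {R : Type u} {Rbar : Type v} [Ring R] [Ring Rbar] (π : R →+* Rbar) (i : ℕ) :=
  grPiece R i ⧸ tauSub π i

/-- The class of `x ∈ n^i` in `f_i`. -/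
def fMk {R : Type u} {Rbar : Type v} [Ring R] [Ring Rbar] (π : R →+* Rbar) (i : ℕ) (x : R)
    (hx : x ∈ primeRadical R ^ i) : fMod π i :=
  Submodule.Quotient.mk (grMk i x hx)

/-- The subset `C⁻¹K = {(φ c)⁻¹ (φ a) : c ∈ C, a ∈ K}` of a left quotient ring. -/
def locSet {R : Type u} {Q : Type v} [Ring R] [Ring Q] (φ : R →+* Q) (K : Ideal R) : Set Q :=
  {q : Q | ∃ c a : R, IsRegElem c ∧ a ∈ K ∧ φ c * q = φ a}

/-- A subset of a ring is a left Ore set (multiplicatively closed and satisfying the left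
Ore condition). -/
def IsLeftOreSubset {A : Type*} [Ring A] (S : Set A) : Prop :=
  (1 : A) ∈ S ∧ (∀ s ∈ S, ∀ t ∈ S, s * t ∈ S) ∧
    ∀ s ∈ S, ∀ a : A, ∃ t ∈ S, ∃ b : A, t * a = b * s

/-- A left denominator set. -/
def IsLeftDenominatorSet {A : Type*} [Ring A] (S : Set A) : Prop :=
  IsLeftOreSubset S ∧ ∀ a : A, ∀ s ∈ S, a * s = 0 → ∃ t ∈ S, t * a = 0

/-!
A left ideal `J` of a left Artinian ring with `J u ⊆ J` for a unit `u` satisfies `J u = J`, since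
right multiplication by `u` is an injective endomorphism of the Artinian module `J`. For
`J = C⁻¹I` and `u` the image of a regular element, this makes `J` two-sided. The closedness of `I`
says that `R/I` embeds in the Artinian ring `Q/C⁻¹I`, each element of which has the form
`(c + I)⁻¹(r + I)` with `c ∈ C`. Using such fractions, one sees that a regular element of `R/I`
stays right regular in `Q/C⁻¹I`, and in a left Artinian ring right regular elements are units.
-/

theorem isRegElem_iff_mem_nonZeroDivisors {R : Type*} [Ring R] {c : R} :
    IsRegElem c ↔ c ∈ nonZeroDivisors R :=
  mem_nonZeroDivisors_iff.symm

theorem IsRegElem.one {R : Type*} [Ring R] : IsRegElem (1 : R) :=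
  isRegElem_iff_mem_nonZeroDivisors.2 (one_mem _)

theorem IsRegElem.mul {R : Type*} [Ring R] {a b : R} (ha : IsRegElem a) (hb : IsRegElem b) :
    IsRegElem (a * b) :=
  isRegElem_iff_mem_nonZeroDivisors.2 <| mul_mem
    (isRegElem_iff_mem_nonZeroDivisors.1 ha) (isRegElem_iff_mem_nonZeroDivisors.1 hb)

theorem IsRegElem.of_isUnit_map {R S : Type*} [Ring R] [Ring S] {f : R →+* S}
    (hf : Injective f) {c : R} (hc : IsUnit (f c)) : IsRegElem c :=
  isRegElem_iff_mem_nonZeroDivisors.2 <|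
    mem_nonZeroDivisors_of_injective hf hc.mem_nonZeroDivisors

theorem map_eq_self_of_injective_of_isArtinian {A M : Type*} [Ring A] [AddCommGroup M]
    [Module A M] {N : Submodule A M} [IsArtinian A N] {f : M →ₗ[A] M} (hf : Injective f)
    (hN : N ≤ N.comap f) : N.map f = N := by
  refine le_antisymm (Submodule.map_le_iff_le_comap.2 hN) fun x hx => ?_
  have hinj : Injective (f.restrict hN) := fun y z hyz =>
    Subtype.ext (hf (congrArg Subtype.val hyz))
  obtain ⟨y, hy⟩ := IsArtinian.surjective_of_injective_endomorphism _ hinj ⟨x, hx⟩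
  exact ⟨y, y.2, congrArg Subtype.val hy⟩

theorem mul_map_mem_ideal_map {A B : Type*} [Ring A] [Ring B] (f : A →+* B) {K : Ideal A}
    [K.IsTwoSided] {q : B} (hq : q ∈ K.map f) (r : A) : q * f r ∈ K.map f := by
  have hle : K.map f ≤ Submodule.comap (LinearMap.toSpanSingleton B B (f r)) (K.map f) := by
    refine Ideal.span_le.2 ?_
    rintro _ ⟨a, ha, rfl⟩
    simpa using Ideal.mem_map_of_mem f (K.mul_mem_right r ha)
  exact hle hq

section LocSet

variable {R : Type u} {Q : Type v} [Ring R] [Ring Q] {φ : R →+* Q} {K : Ideal R}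

theorem map_mem_locSet {a : R} (ha : a ∈ K) : φ a ∈ locSet φ K :=
  ⟨1, a, .one, ha, by rw [map_one, one_mul]⟩

namespace IsLeftQuotRing

theorem ore (h : IsLeftQuotRing φ) (r : R) {c : R} (hc : IsRegElem c) :
    ∃ c' r' : R, IsRegElem c' ∧ c' * r = r' * c := by
  obtain ⟨u, hu⟩ := h.isUnit c hc
  obtain ⟨c', r', hc', hcr⟩ := h.denom (φ r * ↑u⁻¹)
  refine ⟨c', r', hc', h.inj ?_⟩
  rw [map_mul, map_mul, ← hcr, ← hu, mul_assoc, mul_assoc, Units.inv_mul, mul_one]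

theorem add_mem_locSet (h : IsLeftQuotRing φ) {p q : Q} (hp : p ∈ locSet φ K)
    (hq : q ∈ locSet φ K) : p + q ∈ locSet φ K := by
  obtain ⟨c, a, hc, ha, hca⟩ := hp
  obtain ⟨d, b, hd, hb, hdb⟩ := hq
  obtain ⟨c', r', hc', hore⟩ := h.ore c hd
  refine ⟨c' * c, c' * a + r' * b, hc'.mul hc,
    K.add_mem (K.mul_mem_left _ ha) (K.mul_mem_left _ hb), ?_⟩
  calc φ (c' * c) * (p + q) = φ (c' * c) * p + φ (r' * d) * q := by rw [mul_add, hore]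
    _ = φ c' * (φ c * p) + φ r' * (φ d * q) := by simp only [map_mul, mul_assoc]
    _ = φ (c' * a + r' * b) := by rw [hca, hdb, map_add, map_mul, map_mul]

theorem mul_mem_locSet (h : IsLeftQuotRing φ) (p : Q) {q : Q} (hq : q ∈ locSet φ K) :
    p * q ∈ locSet φ K := by
  obtain ⟨c, a, hc, ha, hca⟩ := hq
  obtain ⟨d, r, hd, hdr⟩ := h.denom p
  obtain ⟨c', r', hc', hore⟩ := h.ore r hc
  refine ⟨c' * d, r' * a, hc'.mul hd, K.mul_mem_left _ ha, ?_⟩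
  calc φ (c' * d) * (p * q) = φ c' * (φ d * p) * q := by simp only [map_mul, mul_assoc]
    _ = φ (r' * c) * q := by rw [hdr, ← map_mul, hore]
    _ = φ (r' * a) := by rw [map_mul, mul_assoc, hca, ← map_mul]

theorem coe_map_eq_locSet (h : IsLeftQuotRing φ) (K : Ideal R) :
    (K.map φ : Set Q) = locSet φ K := by
  refine Set.Subset.antisymm (fun q hq => ?_) ?_
  · refine Submodule.span_induction ?_ ?_ (fun _ _ _ _ => h.add_mem_locSet)
      (fun p _ _ => h.mul_mem_locSet p) hq
    · rintro _ ⟨a, ha, rfl⟩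
      exact map_mem_locSet ha
    · simpa only [map_zero] using map_mem_locSet (φ := φ) K.zero_mem
  · rintro q ⟨c, a, hc, ha, hca⟩
    rw [SetLike.mem_coe, ← (K.map φ).unit_mul_mem_iff_mem (h.isUnit c hc), hca]
    exact Ideal.mem_map_of_mem φ ha

theorem comap_map_eq_self (h : IsLeftQuotRing φ)
    (hK : ∀ c : R, IsRegElem c → ∀ r : R, c * r ∈ K → r ∈ K) : (K.map φ).comap φ = K := by
  refine le_antisymm (fun r hr => ?_) Ideal.le_comap_map
  have hr : φ r ∈ locSet φ K := h.coe_map_eq_locSet K ▸ hr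
  obtain ⟨c, a, hc, ha, hca⟩ := hr
  rw [← map_mul] at hca
  exact hK c hc r (h.inj hca ▸ ha)

theorem isTwoSided_map (h : IsLeftQuotRing φ) [IsArtinianRing Q] [K.IsTwoSided] :
    (K.map φ).IsTwoSided := by
  refine ⟨fun {q} p hq => ?_⟩
  obtain ⟨c, r, hc, hcr⟩ := h.denom p
  have hmul : Submodule.map (LinearMap.toSpanSingleton Q Q (φ c)) (K.map φ) = K.map φ :=
    map_eq_self_of_injective_of_isArtinian (f := LinearMap.toSpanSingleton Q Q (φ c))
      (h.isUnit c hc).mul_left_injective fun _ hx => mul_map_mem_ideal_map φ hx c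
  obtain ⟨y, hy, rfl⟩ : ∃ y ∈ K.map φ, y * φ c = q := hmul.ge hq
  rw [mul_assoc, hcr]
  exact mul_map_mem_ideal_map φ hy r

end IsLeftQuotRing

end LocSet

namespace IsLeftQuotRing

theorem of_isArtinianRing {R : Type u} {A : Type v} [Ring R] [Ring A] [IsArtinianRing A]
    {ψ : R →+* A} (hψ : Injective ψ)
    (hfrac : ∀ a : A, ∃ c r : R, IsUnit (ψ c) ∧ ψ c * a = ψ r) : IsLeftQuotRing ψ where
  inj := hψ
  isUnit c hc := by
    rw [IsArtinianRing.isUnit_iff_isRightRegular, isRightRegular_iff_left_eq_zero_of_mul]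
    intro y hy
    obtain ⟨d, r, hd, hdr⟩ := hfrac y
    have hrc : r * c = 0 := hψ <| by rw [map_mul, ← hdr, mul_assoc, hy, mul_zero, map_zero]
    rwa [hc.2 r hrc, map_zero, hd.mul_right_eq_zero] at hdr
  denom a := by
    obtain ⟨c, r, hc, hcr⟩ := hfrac a
    exact ⟨c, r, .of_isUnit_map hψ hc, hcr⟩

theorem of_surjective {R Q R' A : Type*} [Ring R] [Ring Q] [Ring R'] [Ring A] [IsArtinianRing A]
    {φ : R →+* Q} (h : IsLeftQuotRing φ) {ρ : R →+* R'} {θ : Q →+* A} (hθ : Surjective θ)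
    {ψ : R' →+* A} (hψ : Injective ψ) (comm : θ.comp φ = ψ.comp ρ) : IsLeftQuotRing ψ := by
  have comm_apply (r : R) : θ (φ r) = ψ (ρ r) := RingHom.congr_fun comm r
  refine of_isArtinianRing hψ fun a => ?_
  obtain ⟨q, rfl⟩ := hθ a
  obtain ⟨c, r, hc, hcr⟩ := h.denom q
  refine ⟨ρ c, ρ r, comm_apply c ▸ (h.isUnit c hc).map θ, ?_⟩
  rw [← comm_apply, ← comm_apply, ← map_mul, hcr]

end IsLeftQuotRing

theorem factor_ring_has_left_artinian_left_quotient_ring_general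
    {R : Type u} [Ring R] {Q : Type u} [Ring Q] (φ : R →+* Q)
    (hquot : IsLeftQuotRing φ) (hart : IsArtinianRing Q) (I : Ideal R)
    (hIclosed : ∀ c : R, IsRegElem c → ∀ r : R, c * r ∈ I → r ∈ I)
    {R' : Type u} [Ring R'] (ρ : R →+* R') (hρsurj : Surjective ρ) (hρker : RingHom.ker ρ = I) :
    (∃ J : Ideal Q, J.IsTwoSidedNC ∧ (↑J : Set Q) = locSet φ I) ∧
    HasArtinianLeftQuot R' ∧
    ∃ e : LeftQuotData R', IsArtinianRing e.Q ∧
      ∃ θ : Q →+* e.Q, Surjective θ ∧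
        (↑(RingHom.ker θ) : Set Q) = locSet φ I ∧ θ.comp φ = e.φ.comp ρ := by
  subst hρker
  let J : Ideal Q := (RingHom.ker ρ).map φ
  have hJ : (J : Set Q) = locSet φ (RingHom.ker ρ) := hquot.coe_map_eq_locSet _
  have : J.IsTwoSided := hquot.isTwoSided_map
  let θ : Q →+* Q ⧸ J := Ideal.Quotient.mk J
  let ι : R ⧸ RingHom.ker ρ →+* Q ⧸ J := Ideal.quotientMap J φ Ideal.le_comap_map
  have hι : Injective ι := Ideal.quotientMap_injective' (hquot.comap_map_eq_self hIclosed).le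
  let ψ : R' →+* Q ⧸ J := ι.comp (ρ.quotientKerEquivOfSurjective hρsurj).symm.toRingHom
  have hψ : Injective ψ := hι.comp (RingHom.quotientKerEquivOfSurjective hρsurj).symm.injective
  have comm : θ.comp φ = ψ.comp ρ := by
    rw [RingHom.comp_assoc, RingHom.quotientKerEquivOfSurjective_symm_comp,
      Ideal.quotientMap_comp_mk]
  let e : LeftQuotData R' := ⟨_, ψ, hquot.of_surjective Ideal.Quotient.mk_surjective hψ comm⟩
  have he : IsArtinianRing e.Q := inferInstanceAs (IsArtinianRing (Q ⧸ J))
  exact ⟨⟨J, fun _ hq p => J.mul_mem_right p hq, hJ⟩, ⟨e, he⟩, e, he, θ,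
    Ideal.Quotient.mk_surjective, (congrArg _ Ideal.mk_ker).trans hJ, comm⟩

/-- **Theorem (`13Sep12`.(2)).** Let `R` be a ring with a left Artinian left quotient ring
`Q = C⁻¹R`, and let `I` be a `C`-closed (two-sided) ideal of `R` with `I ⊆ n`.  Then the
factor ring `R/I` (realized by a surjective `ρ : R → R'` with kernel `I`) has a left
Artinian left quotient ring `Q(R/I)`, the set `C⁻¹I` is a (two-sided) ideal of `Q`, and the
map `Q/C⁻¹I → Q(R/I)`, `c⁻¹r + C⁻¹I ↦ (c+I)⁻¹(r+I)`, is a ring isomorphism (encoded by a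
surjective ring homomorphism `θ : Q → Q(R/I)` with kernel `C⁻¹I` such that
`θ ∘ φ = ψ ∘ ρ`, where `ψ : R/I → Q(R/I)` is the canonical embedding). -/
theorem factor_ring_has_left_artinian_left_quotient_ring
    {R : Type u} [Ring R] {Q : Type u} [Ring Q] (φ : R →+* Q)
    (hquot : IsLeftQuotRing φ) (hart : IsArtinianRing Q)
    (I : Ideal R) (hI2 : I.IsTwoSidedNC)
    (hIclosed : ∀ c : R, IsRegElem c → ∀ r : R, c * r ∈ I → r ∈ I)
    (hIn : I ≤ primeRadical R)
    {R' : Type u} [Ring R'] (ρ : R →+* R') (hρsurj : Function.Surjective ρ)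
    (hρker : RingHom.ker ρ = I) :
    (∃ J : Ideal Q, J.IsTwoSidedNC ∧ (↑J : Set Q) = locSet φ I) ∧
    HasArtinianLeftQuot R' ∧
    ∃ e : LeftQuotData R', IsArtinianRing e.Q ∧
      ∃ θ : Q →+* e.Q, Function.Surjective θ ∧
        (↑(RingHom.ker θ) : Set Q) = locSet φ I ∧ θ.comp φ = e.φ.comp ρ :=
  factor_ring_has_left_artinian_left_quotient_ring_general φ hquot hart I hIclosed ρ hρsurj hρker
end

section
/- Let R be a ring with a left Artinian left quotient ring Q = C⁻¹R, let r be the (Jacobson = prime) radical of Q with nilpotency degree ν_Q, let Max(Q) = {m₁, …, m_s} be the set of maximal ideals of Q, and set p_i = R ∩ m_i. Then: (1) the set of minimal prime ideals of R is Min(R) = {p₁, …, p_s}, and the prime radical of R is n = p₁ ∩ ⋯ ∩ p_s; (2) n = R ∩ r, C⁻¹n = r, and n is a nilpotent ideal of R of nilpotency degree ν = ν_Q. -/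
open Function

universe u v

/-- A maximal (two-sided) ideal of a ring. -/
def IsMaximalTwoSidedNC {Q : Type*} [Ring Q] (P : Ideal Q) : Prop :=
  P.IsTwoSidedNC ∧ P ≠ ⊤ ∧ ∀ J : Ideal Q, J.IsTwoSidedNC → P < J → J = ⊤

/-- A minimal prime (two-sided) ideal of a ring. -/
def IsMinimalPrimeNC {R : Type*} [Ring R] (P : Ideal R) : Prop :=
  P.IsPrimeNC ∧ ∀ P' : Ideal R, P'.IsPrimeNC → P' ≤ P → P' = P

/-!
Every prime of a semiprimary ring `Q` contains the nilpotent Jacobson radical, so it has a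
semisimple quotient and is maximal; conversely a maximal two-sided ideal is the annihilator of a
simple module, hence prime. Thus `Max(Q)` is the set of all primes of `Q`, and `r = ⋂ mᵢ` is
nilpotent.

Contracting a prime `m` of `Q` to `R` keeps it prime: for `a R b ⊆ R ∩ m` the left ideal
`{x | x R b ⊆ m}` is stable under right multiplication by `R`, and, `Q / m` being Noetherian, also
under right multiplication by inverses of regular elements, so it is two-sided.

Since `rᵏ ⊆ Q (R ∩ r)ᵏ`, the ideals `(R ∩ r)ᵏ` and `rᵏ` vanish together. Hence
`⋂ (R ∩ mᵢ) = R ∩ r` is nilpotent, and every prime of `R` contains some `R ∩ mᵢ`.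
-/

section PrimeIdeals

variable {R : Type*} [Ring R]

theorem le_or_le_of_mul_le_of_isPrimeNC {P I J : Ideal R} (hP : P.IsPrimeNC) (h : I * J ≤ P) :
    I ≤ P ∨ J ≤ P := by
  by_contra! hIJ
  obtain ⟨a, haI, haP⟩ := SetLike.not_le_iff_exists.mp hIJ.1
  obtain ⟨b, hbJ, hbP⟩ := SetLike.not_le_iff_exists.mp hIJ.2
  refine (hP.2.2 a b fun r => ?_).elim haP hbP
  rw [mul_assoc]
  exact h (Ideal.mul_mem_mul haI (J.mul_mem_left r hbJ))

theorem le_of_pow_le_of_isPrimeNC {P I : Ideal R} (hP : P.IsPrimeNC) {k : ℕ} (h : I ^ k ≤ P) :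
    I ≤ P := by
  induction k with
  | zero =>
    rw [Submodule.pow_zero, Ideal.one_eq_top] at h
    exact absurd (top_le_iff.mp h) hP.1
  | succ k ih =>
    rw [Submodule.pow_succ] at h
    exact (le_or_le_of_mul_le_of_isPrimeNC hP h).elim ih id

theorem mul_le_inf_of_isTwoSidedNC {I : Ideal R} (hI : I.IsTwoSidedNC) (J : Ideal R) :
    I * J ≤ I ⊓ J :=
  Ideal.mul_le.mpr fun a ha b hb => ⟨hI a ha b, J.mul_mem_left a hb⟩

theorem exists_le_of_finset_inf_le_of_isPrimeNC {ι : Type*} {P : Ideal R} (hP : P.IsPrimeNC)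
    {t : Finset ι} {f : ι → Ideal R} (hf : ∀ i ∈ t, (f i).IsTwoSidedNC) (h : t.inf f ≤ P) :
    ∃ i ∈ t, f i ≤ P := by
  classical
  induction t using Finset.induction_on with
  | empty => exact absurd (top_le_iff.mp h) hP.1
  | insert i t _ ih =>
    rw [Finset.forall_mem_insert] at hf
    rw [Finset.inf_insert] at h
    rw [Finset.exists_mem_insert]
    exact (le_or_le_of_mul_le_of_isPrimeNC hP ((mul_le_inf_of_isTwoSidedNC hf.1 _).trans h)).imp
      id (ih hf.2)

theorem exists_le_of_pow_iInf_le_of_isPrimeNC {ι : Type*} [Finite ι] {P : Ideal R}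
    (hP : P.IsPrimeNC) {f : ι → Ideal R} (hf : ∀ i, (f i).IsTwoSidedNC) {k : ℕ}
    (h : (⨅ i, f i) ^ k ≤ P) : ∃ i, f i ≤ P := by
  have := Fintype.ofFinite ι
  have hinf : Finset.univ.inf f ≤ P :=
    (Finset.inf_univ_eq_iInf f).trans_le (le_of_pow_le_of_isPrimeNC hP h)
  simpa using exists_le_of_finset_inf_le_of_isPrimeNC hP (fun i _ => hf i) hinf

theorem primeRadical_isTwoSidedNC : (primeRadical R).IsTwoSidedNC := fun a ha r =>
  Submodule.mem_sInf.mpr fun P hP => hP.2.1 a (Submodule.mem_sInf.mp ha P hP) r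

theorem primeRadical_eq_iInf {ι : Type*} {p : ι → Ideal R} (hp : ∀ i, (p i).IsPrimeNC)
    (hcover : ∀ P : Ideal R, P.IsPrimeNC → ∃ i, p i ≤ P) : primeRadical R = ⨅ i, p i :=
  le_antisymm (le_iInf fun i => sInf_le (hp i)) <| le_sInf fun P hP =>
    let ⟨i, hi⟩ := hcover P hP
    iInf_le_of_le i hi

theorem setOf_isMinimalPrimeNC_eq_range {ι : Type*} {p : ι → Ideal R}
    (hp : ∀ i, (p i).IsPrimeNC) (hcover : ∀ P : Ideal R, P.IsPrimeNC → ∃ i, p i ≤ P)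
    (hanti : ∀ i j, p i ≤ p j → p i = p j) :
    {P : Ideal R | IsMinimalPrimeNC P} = Set.range p := by
  ext P
  constructor
  · rintro ⟨hP, hmin⟩
    obtain ⟨i, hi⟩ := hcover P hP
    exact ⟨i, hmin _ (hp i) hi⟩
  · rintro ⟨j, rfl⟩
    refine ⟨hp j, fun P hP hPj => le_antisymm hPj ?_⟩
    obtain ⟨i, hi⟩ := hcover P hP
    exact (hanti i j (hi.trans hPj)).ge.trans hi

end PrimeIdeals

section PrimitiveIdeals

variable {R : Type*} [Ring R]

theorem isPrimeNC_annihilator (M : Type*) [AddCommGroup M] [Module R M] [IsSimpleModule R M] :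
    (Module.annihilator R M).IsPrimeNC := by
  have := IsSimpleModule.nontrivial R M
  refine ⟨?_, fun a ha r => Ideal.mul_mem_right r _ ha, fun a b hab => ?_⟩
  · rwa [Ne, Module.annihilator_eq_top_iff, not_subsingleton_iff_nontrivial]
  · simp only [Module.mem_annihilator] at hab ⊢
    refine or_iff_not_imp_right.mpr fun hb v => ?_
    obtain ⟨w, hw⟩ := not_forall.mp hb
    obtain ⟨r, rfl⟩ := IsSimpleModule.toSpanSingleton_surjective R hw v
    rw [LinearMap.toSpanSingleton_apply, ← mul_smul, ← mul_smul]
    exact hab r w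

theorem annihilator_quotient_le (I : Ideal R) : Module.annihilator R (R ⧸ I) ≤ I := fun a ha => by
  have h := Module.mem_annihilator.mp ha (Submodule.Quotient.mk 1)
  rwa [← Submodule.Quotient.mk_smul, smul_eq_mul, mul_one, Submodule.Quotient.mk_eq_zero] at h

theorem le_annihilator_quotient_of_isTwoSidedNC {I L : Ideal R} (hI : I.IsTwoSidedNC)
    (hIL : I ≤ L) : I ≤ Module.annihilator R (R ⧸ L) := fun a ha =>
  Module.mem_annihilator.mpr <| Submodule.Quotient.mk_surjective L |>.forall.mpr fun x =>
    (Submodule.Quotient.mk_eq_zero L).mpr (hIL (hI a ha x))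

theorem primeRadical_le_jacobson : primeRadical R ≤ Ring.jacobson R :=
  le_sInf fun L hL =>
    have : IsSimpleModule R (R ⧸ L) := isSimpleModule_iff_isCoatom.mpr hL
    calc primeRadical R ≤ Module.annihilator R (R ⧸ L) := sInf_le (isPrimeNC_annihilator (R ⧸ L))
      _ ≤ L := annihilator_quotient_le L

theorem IsMaximalTwoSidedNC.eq_of_le {M I : Ideal R} (hM : IsMaximalTwoSidedNC M)
    (hI : I.IsTwoSidedNC) (hne : I ≠ ⊤) (hle : M ≤ I) : M = I :=
  hle.eq_of_not_lt fun hlt => hne (hM.2.2 I hI hlt)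

theorem IsMaximalTwoSidedNC.isPrimeNC {M : Ideal R} (hM : IsMaximalTwoSidedNC M) :
    M.IsPrimeNC := by
  obtain ⟨L, hL, hML⟩ := Ideal.exists_le_maximal M hM.2.1
  have : IsSimpleModule R (R ⧸ L) := isSimpleModule_iff_isCoatom.mpr hL.out
  have hprime := isPrimeNC_annihilator (R := R) (R ⧸ L)
  have hle := le_annihilator_quotient_of_isTwoSidedNC hM.1 hML
  rwa [hM.eq_of_le hprime.2.1 hprime.1 hle]

end PrimitiveIdeals

section Semiprimary

variable {Q : Type*} [Ring Q]

theorem exists_sup_eq_top_and_inf_eq {I P : Ideal Q} [IsSemisimpleModule Q (Q ⧸ P)]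
    (hPI : P ≤ I) : ∃ K : Ideal Q, I ⊔ K = ⊤ ∧ I ⊓ K = P := by
  have := (Submodule.comapMkQRelIso P).complementedLattice
  obtain ⟨K, hK⟩ := exists_isCompl (⟨I, hPI⟩ : Set.Ici P)
  exact ⟨K, congrArg Subtype.val hK.sup_eq_top, congrArg Subtype.val hK.inf_eq_bot⟩

theorem isMaximalTwoSidedNC_of_isPrimeNC {P : Ideal Q} [IsSemisimpleModule Q (Q ⧸ P)]
    (hP : P.IsPrimeNC) : IsMaximalTwoSidedNC P := by
  refine ⟨hP.2.1, hP.1, fun I hI hPI => ?_⟩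
  obtain ⟨K, hsup, hinf⟩ := exists_sup_eq_top_and_inf_eq hPI.le
  have hmul : I * K ≤ P := (mul_le_inf_of_isTwoSidedNC hI K).trans hinf.le
  have hKP : K ≤ P := (le_or_le_of_mul_le_of_isPrimeNC hP hmul).resolve_left hPI.not_ge
  rwa [sup_eq_left.mpr (hKP.trans hPI.le)] at hsup

variable [IsSemiprimaryRing Q]

theorem isSemisimpleModule_quotient_of_jacobson_le {I : Ideal Q} (hI : Ring.jacobson Q ≤ I) :
    IsSemisimpleModule Q (Q ⧸ I) := by
  let toQuotientRing : (Q ⧸ Ring.jacobson Q) →ₛₗ[Ideal.Quotient.mk (Ring.jacobson Q)]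
      (Q ⧸ Ring.jacobson Q) := { AddMonoidHom.id _ with map_smul' := fun _ _ => rfl }
  have : IsSemisimpleModule Q (Q ⧸ Ring.jacobson Q) :=
    (toQuotientRing.isSemisimpleModule_iff_of_bijective bijective_id).mpr inferInstance
  exact .of_surjective (Submodule.factor hI) (Submodule.factor_surjective hI)

theorem isSemisimpleModule_quotient_of_isPrimeNC {P : Ideal Q} (hP : P.IsPrimeNC) :
    IsSemisimpleModule Q (Q ⧸ P) := by
  obtain ⟨k, hk⟩ := IsSemiprimaryRing.isNilpotent (R := Q)
  exact isSemisimpleModule_quotient_of_jacobson_le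
    (le_of_pow_le_of_isPrimeNC hP (hk.trans_le bot_le))

theorem isPrimeNC_iff_isMaximalTwoSidedNC {P : Ideal Q} :
    P.IsPrimeNC ↔ IsMaximalTwoSidedNC P :=
  ⟨fun hP =>
    have := isSemisimpleModule_quotient_of_isPrimeNC hP
    isMaximalTwoSidedNC_of_isPrimeNC hP, IsMaximalTwoSidedNC.isPrimeNC⟩

variable (Q) in
theorem isNilpotentIdeal_primeRadical : IsNilpotentIdeal (primeRadical Q) := by
  obtain ⟨k, hk⟩ := IsSemiprimaryRing.isNilpotent (R := Q)
  refine ⟨k, le_bot_iff.mp ?_⟩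
  calc primeRadical Q ^ (k + 1) ≤ Ring.jacobson Q ^ (k + 1) :=
        Ideal.pow_right_mono primeRadical_le_jacobson _
    _ ≤ ⊥ := by rw [Submodule.pow_succ, hk, Submodule.zero_eq_bot, Ideal.bot_mul]

end Semiprimary

-- Right multiplication by `u` is a surjective endomorphism of `Q ⧸ A`, hence injective.
theorem mem_of_mul_mem_of_isUnit {Q : Type*} [Ring Q] {A : Ideal Q} [IsNoetherian Q (Q ⧸ A)]
    {u : Q} (hu : IsUnit u) (hA : ∀ x ∈ A, x * u ∈ A) {x : Q} (hx : x * u ∈ A) : x ∈ A := by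
  let mulRight : (Q ⧸ A) →ₗ[Q] (Q ⧸ A) := A.mapQ A (LinearMap.toSpanSingleton Q Q u) hA
  have hsurj : Surjective mulRight := by
    refine (Submodule.Quotient.mk_surjective A).forall.mpr fun y => ?_
    obtain ⟨z, rfl⟩ := (IsUnit.isUnit_iff_mulRight_bijective.mp hu).surjective y
    exact ⟨Submodule.Quotient.mk z, rfl⟩
  have hinj := IsNoetherian.injective_of_surjective_endomorphism mulRight hsurj
  refine (Submodule.Quotient.mk_eq_zero A).mp ((map_eq_zero_iff mulRight hinj).mp ?_)
  exact (Submodule.Quotient.mk_eq_zero A).mpr hx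

theorem comap_pow_le_comap_pow {R S : Type*} [Ring R] [Ring S] (φ : R →+* S) (I : Ideal S)
    (k : ℕ) : (I.comap φ) ^ k ≤ (I ^ k).comap φ := by
  induction k with
  | zero => simp only [Submodule.pow_zero, Ideal.one_eq_top, Ideal.comap_top, le_refl]
  | succ k ih =>
    rw [Submodule.pow_succ, Submodule.pow_succ]
    refine Ideal.mul_le.mpr fun a ha b hb => ?_
    rw [Ideal.mem_comap, map_mul]
    exact Ideal.mul_mem_mul (ih ha) hb

namespace IsLeftQuotRing

variable {R : Type u} [Ring R] {Q : Type v} [Ring Q] {φ : R →+* Q}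

theorem coe_eq_locSet_comap (hφ : IsLeftQuotRing φ) (I : Ideal Q) :
    (I : Set Q) = locSet φ (I.comap φ) := by
  ext q
  constructor
  · intro hq
    obtain ⟨c, a, hc, hca⟩ := hφ.denom q
    exact ⟨c, a, hc, Ideal.mem_comap.mpr (hca ▸ I.mul_mem_left _ hq), hca⟩
  · rintro ⟨c, a, hc, ha, hca⟩
    refine (Ideal.unit_mul_mem_iff_mem I (hφ.isUnit c hc)).mp ?_
    rwa [hca]

theorem comap_le_comap_iff (hφ : IsLeftQuotRing φ) {I J : Ideal Q} :
    I.comap φ ≤ J.comap φ ↔ I ≤ J := by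
  refine ⟨fun h => ?_, fun h => Ideal.comap_mono h⟩
  rw [← SetLike.coe_subset_coe, hφ.coe_eq_locSet_comap I, hφ.coe_eq_locSet_comap J]
  rintro q ⟨c, a, hc, ha, hca⟩
  exact ⟨c, a, hc, h ha, hca⟩

theorem isTwoSidedNC_of_mul_map_mem (hφ : IsLeftQuotRing φ) {A : Ideal Q}
    [IsNoetherian Q (Q ⧸ A)] (hA : ∀ x ∈ A, ∀ r : R, x * φ r ∈ A) : A.IsTwoSidedNC := by
  intro x hx q
  obtain ⟨c, r, hc, hcr⟩ := hφ.denom q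
  have hu := hφ.isUnit c hc
  obtain ⟨y, rfl⟩ := (IsUnit.isUnit_iff_mulRight_bijective.mp hu).surjective x
  have hy : y ∈ A := mem_of_mul_mem_of_isUnit hu (fun z hz => hA z hz c) hx
  rw [mul_assoc, hcr]
  exact hA y hy r

theorem isPrimeNC_comap (hφ : IsLeftQuotRing φ) {P : Ideal Q} [IsNoetherian Q (Q ⧸ P)]
    (hP : P.IsPrimeNC) : (P.comap φ).IsPrimeNC := by
  refine ⟨Ideal.comap_ne_top φ hP.1, fun a ha r => ?_, fun a b hab => ?_⟩
  · rw [Ideal.mem_comap, map_mul]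
    exact hP.2.1 _ ha _
  · let A : Ideal Q := ⨅ t : R, Submodule.comap (LinearMap.toSpanSingleton Q Q (φ t * φ b)) P
    have mem_A {x : Q} : x ∈ A ↔ ∀ t : R, x * (φ t * φ b) ∈ P := Submodule.mem_iInf _
    have hPA : P ≤ A := fun x hx => mem_A.mpr fun t => hP.2.1 x hx _
    have : IsNoetherian Q (Q ⧸ A) :=
      isNoetherian_of_surjective (Submodule.factor hPA)
        (LinearMap.range_eq_top.mpr (Submodule.factor_surjective hPA))
    have hA : A.IsTwoSidedNC := hφ.isTwoSidedNC_of_mul_map_mem fun x hx r => mem_A.mpr fun t => by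
      rw [mul_assoc, ← mul_assoc (φ r), ← map_mul]
      exact mem_A.mp hx (r * t)
    have ha : φ a ∈ A := mem_A.mpr fun t => by
      rw [← mul_assoc, ← map_mul, ← map_mul]
      exact hab t
    refine hP.2.2 (φ a) (φ b) fun q => ?_
    simpa only [map_one, one_mul] using mem_A.mp (hA _ ha q) 1

theorem mul_map_le_map_comap_mul (hφ : IsLeftQuotRing φ) {I : Ideal Q} (hI : I.IsTwoSidedNC)
    (K : Ideal R) : I * K.map φ ≤ (I.comap φ * K).map φ := by
  refine Ideal.mul_le.mpr fun x hx y hy => ?_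
  induction hy using Submodule.span_induction generalizing x with
  | mem y hy =>
    obtain ⟨z, hz, rfl⟩ := hy
    obtain ⟨c, a, hc, ha, hca⟩ := (hφ.coe_eq_locSet_comap I).subset hx
    refine (Ideal.unit_mul_mem_iff_mem _ (hφ.isUnit c hc)).mp ?_
    rw [← mul_assoc, hca, ← map_mul]
    exact Ideal.mem_map_of_mem φ (Ideal.mul_mem_mul ha hz)
  | zero => simp only [mul_zero, zero_mem]
  | add y z _ _ hy hz => rw [mul_add]; exact add_mem (hy x hx) (hz x hx)
  | smul q y _ hy => rw [smul_eq_mul, ← mul_assoc]; exact hy _ (hI x hx q)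

theorem pow_le_map_comap_pow (hφ : IsLeftQuotRing φ) {I : Ideal Q} (hI : I.IsTwoSidedNC)
    (k : ℕ) : I ^ k ≤ ((I.comap φ) ^ k).map φ := by
  have : I.IsTwoSided := ⟨fun b ha => hI _ ha b⟩
  induction k with
  | zero => simp only [Submodule.pow_zero, Ideal.one_eq_top, Ideal.map_top, le_refl]
  | succ k ih =>
    calc I ^ (k + 1) = I * I ^ k := Ideal.IsTwoSided.pow_succ ..
      _ ≤ I * ((I.comap φ) ^ k).map φ := Ideal.mul_mono_right ih
      _ ≤ (I.comap φ * (I.comap φ) ^ k).map φ := hφ.mul_map_le_map_comap_mul hI _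
      _ = ((I.comap φ) ^ (k + 1)).map φ := by rw [Ideal.IsTwoSided.pow_succ]

theorem comap_pow_eq_bot_iff (hφ : IsLeftQuotRing φ) {I : Ideal Q} (hI : I.IsTwoSidedNC)
    (k : ℕ) : (I.comap φ) ^ k = ⊥ ↔ I ^ k = ⊥ := by
  constructor <;> intro h <;> rw [eq_bot_iff]
  · calc I ^ k ≤ ((I.comap φ) ^ k).map φ := hφ.pow_le_map_comap_pow hI k
      _ = ⊥ := by rw [h, Ideal.map_bot]
  · calc (I.comap φ) ^ k ≤ (I ^ k).comap φ := comap_pow_le_comap_pow φ I k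
      _ = ⊥ := by rw [h, Ideal.comap_bot_of_injective φ hφ.inj]

end IsLeftQuotRing

theorem minimal_primes_and_prime_radical_of_order_general
    {R : Type u} [Ring R] {Q : Type v} [Ring Q] [IsSemiprimaryRing Q] {φ : R →+* Q}
    (hquot : IsLeftQuotRing φ) {ι : Type*} [Finite ι] {m : ι → Ideal Q}
    (hmax : {P : Ideal Q | IsMaximalTwoSidedNC P} = Set.range m) :
    ({P : Ideal R | IsMinimalPrimeNC P} = Set.range fun i => (m i).comap φ) ∧
    (primeRadical R = ⨅ i, (m i).comap φ) ∧
    (primeRadical R = (primeRadical Q).comap φ) ∧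
    ((↑(primeRadical Q) : Set Q) = locSet φ (primeRadical R)) ∧
    IsNilpotentIdeal (primeRadical R) ∧
    (∀ k : ℕ, primeRadical R ^ k = ⊥ ↔ primeRadical Q ^ k = ⊥) := by
  have hmaxm (i : ι) : IsMaximalTwoSidedNC (m i) := hmax.ge ⟨i, rfl⟩
  have hm (i : ι) : (m i).IsPrimeNC := isPrimeNC_iff_isMaximalTwoSidedNC.mpr (hmaxm i)
  have hp (i : ι) : ((m i).comap φ).IsPrimeNC :=
    have := isSemisimpleModule_quotient_of_isPrimeNC (hm i)
    hquot.isPrimeNC_comap (hm i)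
  have hcoverQ (P : Ideal Q) (hP : P.IsPrimeNC) : ∃ i, m i ≤ P :=
    (hmax.le (isPrimeNC_iff_isMaximalTwoSidedNC.mp hP)).imp fun _ => le_of_eq
  have hradQ : (primeRadical Q).comap φ = ⨅ i, (m i).comap φ := by
    rw [primeRadical_eq_iInf hm hcoverQ, Ideal.comap_iInf]
  have hpow := hquot.comap_pow_eq_bot_iff (I := primeRadical Q) primeRadical_isTwoSidedNC
  obtain ⟨k, hk⟩ := isNilpotentIdeal_primeRadical Q
  have hcover (P : Ideal R) (hP : P.IsPrimeNC) : ∃ i, (m i).comap φ ≤ P :=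
    exists_le_of_pow_iInf_le_of_isPrimeNC hP (fun i => (hp i).2.1)
      ((hradQ ▸ (hpow _).mpr hk).trans_le bot_le)
  have hradR : primeRadical R = (primeRadical Q).comap φ :=
    (primeRadical_eq_iInf hp hcover).trans hradQ.symm
  have hanti (i j : ι) (hij : (m i).comap φ ≤ (m j).comap φ) : (m i).comap φ = (m j).comap φ :=
    congrArg _ ((hmaxm i).eq_of_le (hmaxm j).1 (hmaxm j).2.1 (hquot.comap_le_comap_iff.mp hij))
  refine ⟨setOf_isMinimalPrimeNC_eq_range hp hcover hanti, hradR.trans hradQ, hradR, ?_⟩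
  rw [hradR]
  exact ⟨hquot.coe_eq_locSet_comap _, ⟨k, (hpow _).mpr hk⟩, hpow⟩

/-- **Proposition (`b13Sep12`.(2),(3)).** Let `R` be a ring with a left Artinian left
quotient ring `Q = C⁻¹R` (realized by `φ : R → Q`), let `r = primeRadical Q` be the
(Jacobson = prime) radical of `Q`, let `Max(Q) = {m₁, …, m_s}` be the (finitely many)
maximal (two-sided) ideals of `Q` and put `p_i = R ∩ m_i`.  Then:
(1) `Min(R) = {p₁, …, p_s}` is the set of minimal primes of `R`, and the prime radical of
`R` is `n = p₁ ∩ ⋯ ∩ p_s`;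
(2) `n = R ∩ r`, `C⁻¹n = r`, and `n` is a nilpotent ideal of `R` whose nilpotency degree
equals that of `r` (encoded: `n^k = ⊥ ↔ r^k = ⊥` for all `k`). -/
theorem minimal_primes_and_prime_radical_of_order
    {R : Type u} [Ring R] {Q : Type v} [Ring Q] (φ : R →+* Q)
    (hquot : IsLeftQuotRing φ) (hart : IsArtinianRing Q)
    (s : ℕ) (m : Fin s → Ideal Q) (hminj : Function.Injective m)
    (hmax : {P : Ideal Q | IsMaximalTwoSidedNC P} = Set.range m) :
    ({P : Ideal R | IsMinimalPrimeNC P} = Set.range fun i => (m i).comap φ) ∧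
    (primeRadical R = ⨅ i : Fin s, (m i).comap φ) ∧
    (primeRadical R = (primeRadical Q).comap φ) ∧
    ((↑(primeRadical Q) : Set Q) = locSet φ (primeRadical R)) ∧
    IsNilpotentIdeal (primeRadical R) ∧
    (∀ k : ℕ, primeRadical R ^ k = ⊥ ↔ primeRadical Q ^ k = ⊥) :=
  minimal_primes_and_prime_radical_of_order_general hquot hmax
end
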